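/- arXiv:2101.09032 — 2 statements merged into one kernel-verified Lean document; each statement's English description precedes it below -/
import Mathlib

section
/- A trace τ over (T,X,V) is PC but not SI if and only if its split trace τ_split is SER and there exists a transaction t with (t,t) ∈ R* ; sto ; cf, where R = (po ∪ rf ∪ sto) ∪ ((po ∪ rf ∪ sto) ; cf) and R* is its reflexive-transitive closure (equivalently: τ has a happens-before cycle that contains a sto dependency immediately followed by a cf dependency and contains no two successive cf dependencies). (Trace-level content of Theorem 4 of the paper.) -/
open scoped Classical

/-- A trace over `(T, X, V)`: transactions `T`, shared variables `X`, values `V`.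
Each transaction has a read set `RS` with read values `rdval`, a write set `WS`
with last-written values `wrval`; there is an initial transaction `t0`, a
program order `po`, per-variable read-from relations `rf x` and per-variable
store orders `sto x`. -/
structure TxnTrace (T X V : Type*) where
  RS : T → Set X
  WS : T → Set X
  rdval : T → X → V
  wrval : T → X → V
  t0 : T
  po : T → T → Prop
  rf : X → T → T → Prop
  sto : X → T → T → Prop

/-- a strict partial order: irreflexive and transitive binary relation -/
def StrictPartialRel {α : Type*} (r : α → α → Prop) : Prop :=
  (∀ a, ¬ r a a) ∧ ∀ a b c, r a b → r b c → r a c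

/-- a strict total order -/
def StrictTotalRel {α : Type*} (r : α → α → Prop) : Prop :=
  StrictPartialRel r ∧ ∀ a b, a ≠ b → r a b ∨ r b a

/-- axiom Prefix: `arb ; vis ⊆ vis` -/
def PrefixAx {α : Type*} (vis arb : α → α → Prop) : Prop :=
  ∀ a b c, arb a b → vis b c → vis a c

/-- `vis` is a strict partial order, `arb` a strict total order, `vis ⊆ arb` -/
def GoodPair {α : Type*} (vis arb : α → α → Prop) : Prop :=
  StrictPartialRel vis ∧ StrictTotalRel arb ∧ ∀ a b, vis a b → arb a b

namespace TxnTrace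

variable {T X V : Type*} (τ : TxnTrace T X V)

/-- the well-formedness conditions of a trace -/
structure WellFormed : Prop where
  rs_init : τ.RS τ.t0 = ∅
  ws_init : τ.WS τ.t0 = Set.univ
  po_irrefl : ∀ t, ¬ τ.po t t
  po_trans : ∀ a b c, τ.po a b → τ.po b c → τ.po a c
  po_init : ∀ t, t ≠ τ.t0 → τ.po τ.t0 t
  rf_wf : ∀ x t' t, τ.rf x t' t →
    t' ≠ t ∧ x ∈ τ.RS t ∧ x ∈ τ.WS t' ∧ τ.wrval t' x = τ.rdval t x
  rf_total : ∀ t x, x ∈ τ.RS t → ∃! t', τ.rf x t' t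
  sto_dom : ∀ x a b, τ.sto x a b → x ∈ τ.WS a ∧ x ∈ τ.WS b
  sto_irrefl : ∀ x a, ¬ τ.sto x a a
  sto_trans : ∀ x a b c, τ.sto x a b → τ.sto x b c → τ.sto x a c
  sto_total : ∀ x a b, x ∈ τ.WS a → x ∈ τ.WS b → a ≠ b → τ.sto x a b ∨ τ.sto x b a

/-- `rf = ⋃ x, rf x` -/
def rfR (a b : T) : Prop := ∃ x, τ.rf x a b

/-- `sto = ⋃ x, sto x` -/
def stoR (a b : T) : Prop := ∃ x, τ.sto x a b

/-- the conflict relation: `(t1,t3) ∈ cf` iff `t1 ≠ t3` and there are `x`, `t2`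
with `(t2,t1) ∈ rf_x` and `(t2,t3) ∈ sto_x` -/
def cf (a b : T) : Prop := a ≠ b ∧ ∃ x w, τ.rf x w a ∧ τ.sto x w b

/-- `vis0 = po ∪ rf` -/
def vis0 (a b : T) : Prop := τ.po a b ∨ τ.rfR a b

/-- `arb0 = po ∪ rf ∪ sto` -/
def arb0 (a b : T) : Prop := τ.po a b ∨ τ.rfR a b ∨ τ.stoR a b

/-- happens-before: `(po ∪ rf ∪ sto ∪ cf)⁺` -/
def hb : T → T → Prop := Relation.TransGen (fun a b => τ.arb0 a b ∨ τ.cf a b)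

/-- axiom PoCo: `vis0⁺ ⊆ vis` -/
def PoCo (vis : T → T → Prop) : Prop := ∀ a b, Relation.TransGen τ.vis0 a b → vis a b

/-- axiom CoArb: `arb0⁺ ⊆ arb` -/
def CoArb (arb : T → T → Prop) : Prop := ∀ a b, Relation.TransGen τ.arb0 a b → arb a b

/-- axiom RetVal: every read of `x` in `t` reads from the `arb`-greatest
`vis`-predecessor of `t` writing `x` -/
def RetVal (vis arb : T → T → Prop) : Prop :=
  ∀ t x, x ∈ τ.RS t → ∃ t00,
    (vis t00 t ∧ x ∈ τ.WS t00) ∧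
    (∀ t', vis t' t → x ∈ τ.WS t' → t' ≠ t00 → arb t' t00) ∧
    τ.rf x t00 t


/-- axiom Conflict: `sto ⊆ vis` -/
def ConflictAx (vis : T → T → Prop) : Prop := ∀ a b, τ.stoR a b → vis a b


/-- causal consistency -/
def IsCC : Prop :=
  ∃ vis arb, GoodPair vis arb ∧ τ.PoCo vis ∧ τ.CoArb arb ∧ τ.RetVal vis arb

/-- prefix consistency -/
def IsPC : Prop :=
  ∃ vis arb, GoodPair vis arb ∧ τ.PoCo vis ∧ τ.CoArb arb ∧ τ.RetVal vis arb ∧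
    PrefixAx vis arb

/-- snapshot isolation -/
def IsSI : Prop :=
  ∃ vis arb, GoodPair vis arb ∧ τ.PoCo vis ∧ τ.CoArb arb ∧ τ.RetVal vis arb ∧
    PrefixAx vis arb ∧ τ.ConflictAx vis

/-- serializability: some strict total order `arb` with `arb0⁺ ⊆ arb` satisfies
RetVal with `vis = arb` -/
def IsSER : Prop :=
  ∃ arb, StrictTotalRel arb ∧ τ.CoArb arb ∧ τ.RetVal arb arb

/-- the read part `t_rd` of a transaction in the split trace -/
def rdPart (t : T) : T × Bool := (t, false)

/-- the write part `t_wr` of a transaction in the split trace;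
the initial transaction `t0` is kept unchanged and plays both roles -/
noncomputable def wrPart (t : T) : T × Bool := if t = τ.t0 then (t, false) else (t, true)

/-- the split trace `τ_split`: every transaction `t ≠ t0` is split into a read
part `t_rd` and a write part `t_wr`; `po'` is the smallest transitive relation
containing `(t_rd, t_wr)` for every split `t` and `(u_wr, v_rd)` for `(u,v) ∈ po`;
`rf'_x = {(u_wr, v_rd) : (u,v) ∈ rf_x}`; `sto'_x = {(u_wr, v_wr) : (u,v) ∈ sto_x}`.
(The pair `(t0, true)` is an unused dummy element with empty read and write sets and
no incident relations.) -/
noncomputable def split : TxnTrace (T × Bool) X V where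
  RS p := if p = rdPart p.1 then τ.RS p.1 else ∅
  WS p := if p = τ.wrPart p.1 then τ.WS p.1 else ∅
  rdval p x := τ.rdval p.1 x
  wrval p x := τ.wrval p.1 x
  t0 := (τ.t0, false)
  po := Relation.TransGen (fun a b =>
    (∃ t, t ≠ τ.t0 ∧ a = rdPart t ∧ b = τ.wrPart t) ∨
    (∃ u v, τ.po u v ∧ a = τ.wrPart u ∧ b = rdPart v))
  rf := fun x a b => ∃ u v, τ.rf x u v ∧ a = τ.wrPart u ∧ b = rdPart v
  sto := fun x a b => ∃ u v, τ.sto x u v ∧ a = τ.wrPart u ∧ b = τ.wrPart v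

end TxnTrace

/-!
PC and SI ask for the same kind of execution `(vis, arb)`, one satisfying Prefix, except that `vis`
has to contain `W = po ∪ rf` for PC and `W = po ∪ rf ∪ sto` for SI. RetVal says that `(t, u) ∈ cf`
forbids `u` from being visible to `t`, and under Prefix, `arb` being total, this forces
`W ; cf ⊆ arb`. Hence such an execution exists iff `arb0 ∪ (W ; cf)` is acyclic. For the two choices
of `W` these relations differ only by steps in `sto ; cf`, so when the first is acyclic, every cycle
of the second passes through such a step.

Under Prefix, the transactions visible to `t` form an initial segment of `arb`, the snapshot of `t`.
Placing `t_wr` at the position of `t` in `arb` and `t_rd` right after the snapshot of `t` turns an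
execution into a serial order of the split trace; conversely, a serial order of the split trace
gives an execution in which `u` is visible to `v` iff `u_wr` comes before `v_rd`.
-/

open Relation

namespace StrictPartialRel

variable {α : Type*} {r s : α → α → Prop}

theorem transGen_le_iff (hs : StrictPartialRel s) : TransGen r ≤ s ↔ r ≤ s := by
  have : IsTrans α s := ⟨hs.2⟩
  exact ⟨fun h a b hab ↦ h a b (.single hab), transGen_minimal⟩

theorem exists_strictTotalRel_ge (hr : StrictPartialRel r) : ∃ s, StrictTotalRel s ∧ r ≤ s := by
  have : IsStrictOrder α r := { irrefl := hr.1, trans := hr.2 }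
  let := partialOrderOfSO r
  let e : α → LinearExtension α := toLinearExtension
  have he : Function.Injective e := Function.injective_id
  exact ⟨fun a b ↦ e a < e b,
    ⟨⟨fun _ ↦ lt_irrefl _, fun _ _ _ ↦ lt_trans⟩, fun _ _ hab ↦ lt_or_gt_of_ne (he.ne hab)⟩,
    fun _ _ hab ↦ toLinearExtension.monotone.strictMono_of_injective he hab⟩

end StrictPartialRel

theorem exists_strictTotalRel_ge_of_acyclic {α : Type*} {r : α → α → Prop}
    (hr : ∀ a, ¬ TransGen r a a) : ∃ s, StrictTotalRel s ∧ r ≤ s := by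
  have hpartial : StrictPartialRel (TransGen r) := ⟨hr, fun _ _ _ ↦ TransGen.trans⟩
  obtain ⟨s, hs, hrs⟩ := hpartial.exists_strictTotalRel_ge
  exact ⟨s, hs, (hs.1.transGen_le_iff).1 hrs⟩

theorem transGen_or_exists_not_step {α : Type*} {r s : α → α → Prop} {a b : α}
    (h : TransGen r a b) :
    TransGen s a b ∨ ∃ p q, ReflTransGen r a p ∧ r p q ∧ ¬ s p q ∧ ReflTransGen r q b := by
  induction h with
  | @single b hab =>
    by_cases hs : s a b
    · exact .inl (.single hs)
    · exact .inr ⟨a, b, .refl, hab, hs, .refl⟩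
  | @tail b c hab hbc ih =>
    obtain hs | ⟨p, q, hap, hpq, hs, hqb⟩ := ih
    · by_cases hs' : s b c
      · exact .inl (hs.tail hs')
      · exact .inr ⟨b, c, hab.to_reflTransGen, hbc, hs', .refl⟩
    · exact .inr ⟨p, q, hap, hpq, hs, hqb.tail hbc⟩

namespace TxnTrace

variable {T X V : Type*} {τ : TxnTrace T X V} {W vis arb : T → T → Prop}

theorem vis0_le_arb0 : τ.vis0 ≤ τ.arb0 := fun _ _ h ↦ h.imp_right .inl

/-- The relation `arb0 ∪ (W ; cf)`: one step along happens-before, with each `cf` edge bundled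
with a preceding `W` edge. For `W = arb0` this is the relation `R` of `pc_not_si_iff`. -/
def hbStep (τ : TxnTrace T X V) (W : T → T → Prop) (a b : T) : Prop :=
  τ.arb0 a b ∨ ∃ c, W a c ∧ τ.cf c b

/-- The trace has an execution `(vis, arb)` satisfying Prefix, CoArb and RetVal whose visibility
contains `W`. PC and SI are the cases `W = vis0` and `W = arb0`. -/
def HasPrefixExecution (τ : TxnTrace T X V) (W : T → T → Prop) : Prop :=
  ∃ vis arb, GoodPair vis arb ∧ W ≤ vis ∧ τ.arb0 ≤ arb ∧ τ.RetVal vis arb ∧ PrefixAx vis arb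

theorem isPC_iff_hasPrefixExecution : τ.IsPC ↔ τ.HasPrefixExecution τ.vis0 :=
  exists₂_congr fun _ _ ↦ and_congr_right fun hgood ↦
    and_congr hgood.1.transGen_le_iff (and_congr_left fun _ ↦ hgood.2.1.1.transGen_le_iff)

theorem isSI_iff_hasPrefixExecution : τ.IsSI ↔ τ.HasPrefixExecution τ.arb0 := by
  refine exists₂_congr fun vis arb ↦ and_congr_right fun hgood ↦ ?_
  have hPoCo : τ.PoCo vis ↔ τ.vis0 ≤ vis := hgood.1.transGen_le_iff
  have hCoArb : τ.CoArb arb ↔ τ.arb0 ≤ arb := hgood.2.1.1.transGen_le_iff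
  have hsplit : τ.arb0 ≤ vis ↔ τ.vis0 ≤ vis ∧ τ.ConflictAx vis :=
    ⟨fun h ↦ ⟨vis0_le_arb0.trans h, fun a b hab ↦ h a b (.inr (.inr hab))⟩,
      fun h a b hab ↦ (or_assoc.2 hab).elim (h.1 a b) (h.2 a b)⟩
  rw [hPoCo, hCoArb, hsplit]
  tauto

theorem WellFormed.retVal_iff_not_vis_of_cf (hwf : τ.WellFormed) (hvis : ∀ a, ¬ vis a a)
    (harb : StrictPartialRel arb) (hrf : τ.rfR ≤ vis) (hsto : τ.stoR ≤ arb) :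
    τ.RetVal vis arb ↔ ∀ t u, τ.cf t u → ¬ vis u t := by
  constructor
  · rintro hret t u ⟨-, x, w, hwt, hwu⟩ hut
    have hx := (hwf.rf_wf x w t hwt).2.1
    obtain ⟨w', -, hmax, hwt'⟩ := hret t x hx
    obtain rfl : w' = w := (hwf.rf_total t x hx).unique hwt' hwt
    have hne : u ≠ w' := by
      rintro rfl
      exact hwf.sto_irrefl x u hwu
    have huw : arb u w' := hmax u hut (hwf.sto_dom x w' u hwu).2 hne
    exact harb.1 u (harb.2 u w' u huw (hsto w' u ⟨x, hwu⟩))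
  · intro hcf t x hx
    obtain ⟨w, hwt, -⟩ := hwf.rf_total t x hx
    have hxw := (hwf.rf_wf x w t hwt).2.2.1
    refine ⟨w, ⟨hrf w t ⟨x, hwt⟩, hxw⟩, fun u hut hxu hne ↦ ?_, hwt⟩
    have htu : t ≠ u := by
      rintro rfl
      exact hvis t hut
    exact (hwf.sto_total x u w hxu hxw hne).elim (fun huw ↦ hsto u w ⟨x, huw⟩)
      fun hwu ↦ absurd hut (hcf t u ⟨htu, x, w, hwt, hwu⟩)

theorem hbStep_le_of_prefixAx (harb : StrictTotalRel arb)
    (hW : W ≤ vis) (harb0 : τ.arb0 ≤ arb) (hcf : ∀ t u, τ.cf t u → ¬ vis u t)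
    (hprefix : PrefixAx vis arb) : τ.hbStep W ≤ arb := by
  rintro a b (hab | ⟨c, hac, hcb⟩)
  · exact harb0 a b hab
  · have hbc : ¬ vis b c := hcf c b hcb
    have hne : a ≠ b := by
      rintro rfl
      exact hbc (hW a c hac)
    exact (harb.2 a b hne).resolve_right fun hba ↦ hbc (hprefix b a c hba (hW a c hac))

/-- The relation `arb^= ; W`: for transitive `arb`, the least visibility that contains `W` and
satisfies Prefix. -/
def prefixVis (arb W : T → T → Prop) : T → T → Prop := Comp (ReflGen arb) W

theorem le_prefixVis : W ≤ prefixVis arb W := fun a _ h ↦ ⟨a, .refl, h⟩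

theorem prefixVis_le (harb : StrictPartialRel arb) (hW : W ≤ arb) : prefixVis arb W ≤ arb := by
  rintro a b ⟨c, hac | hac, hcb⟩
  · exact hW a b hcb
  · exact harb.2 a c b hac (hW c b hcb)

theorem prefixAx_prefixVis (harb : StrictPartialRel arb) : PrefixAx (prefixVis arb W) arb := by
  rintro a b d hab ⟨c, hbc | hbc, hcd⟩
  · exact ⟨b, .single hab, hcd⟩
  · exact ⟨c, .single (harb.2 a b c hab hbc), hcd⟩

theorem goodPair_prefixVis (harb : StrictTotalRel arb) (hW : W ≤ arb) :
    GoodPair (prefixVis arb W) arb := by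
  have hle : prefixVis arb W ≤ arb := prefixVis_le harb.1 hW
  exact ⟨⟨fun a ha ↦ harb.1.1 a (hle a a ha),
    fun a b c hab hbc ↦ prefixAx_prefixVis harb.1 a b c (hle a b hab) hbc⟩, harb, hle⟩

theorem not_prefixVis_of_cf (harb : StrictPartialRel arb) (hstep : τ.hbStep W ≤ arb) {t u : T}
    (h : τ.cf t u) : ¬ prefixVis arb W u t := by
  rintro ⟨c, huc, hct⟩
  have hcu : arb c u := hstep c u (.inr ⟨t, hct, h⟩)
  obtain _ | huc := huc
  · exact harb.1 u hcu
  · exact harb.1 u (harb.2 u c u huc hcu)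

theorem WellFormed.hasPrefixExecution_iff (hwf : τ.WellFormed) (hvis0 : τ.vis0 ≤ W)
    (hWarb0 : W ≤ τ.arb0) : τ.HasPrefixExecution W ↔ ∀ t, ¬ TransGen (τ.hbStep W) t t := by
  constructor
  · rintro ⟨vis, arb, ⟨hvis, harb, -⟩, hW, harb0, hret, hprefix⟩ t ht
    have hcf := (hwf.retVal_iff_not_vis_of_cf hvis.1 harb.1
      (fun a b hab ↦ hW a b (hvis0 a b (.inr hab)))
      (fun a b hab ↦ harb0 a b (.inr (.inr hab)))).1 hret
    have hstep : τ.hbStep W ≤ arb := hbStep_le_of_prefixAx harb hW harb0 hcf hprefix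
    exact harb.1.1 t (harb.1.transGen_le_iff.2 hstep t t ht)
  · intro hacyclic
    obtain ⟨arb, harb, hstep⟩ := exists_strictTotalRel_ge_of_acyclic hacyclic
    have harb0 : τ.arb0 ≤ arb := fun a b hab ↦ hstep a b (.inl hab)
    have hgood := goodPair_prefixVis harb (hWarb0.trans harb0)
    refine ⟨prefixVis arb W, arb, hgood, le_prefixVis, harb0, ?_, prefixAx_prefixVis harb.1⟩
    exact (hwf.retVal_iff_not_vis_of_cf hgood.1.1 harb.1
      (fun a b hab ↦ le_prefixVis a b (hvis0 a b (.inr hab)))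
      (fun a b hab ↦ harb0 a b (.inr (.inr hab)))).2
      fun _ _ ↦ not_prefixVis_of_cf harb.1 hstep

theorem WellFormed.isPC_iff_acyclic (hwf : τ.WellFormed) :
    τ.IsPC ↔ ∀ t, ¬ TransGen (τ.hbStep τ.vis0) t t :=
  isPC_iff_hasPrefixExecution.trans (hwf.hasPrefixExecution_iff le_rfl vis0_le_arb0)

theorem WellFormed.isSI_iff_acyclic (hwf : τ.WellFormed) :
    τ.IsSI ↔ ∀ t, ¬ TransGen (τ.hbStep τ.arb0) t t :=
  isSI_iff_hasPrefixExecution.trans (hwf.hasPrefixExecution_iff vis0_le_arb0 le_rfl)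

theorem exists_sto_cf_of_hbStep_arb0 {a b : T} (h : τ.hbStep τ.arb0 a b)
    (hne : ¬ τ.hbStep τ.vis0 a b) : ∃ c, τ.stoR a c ∧ τ.cf c b := by
  obtain hab | ⟨c, hac, hcb⟩ := h
  · exact absurd (.inl hab) hne
  · obtain hac | hac := or_assoc.2 hac
    · exact absurd (.inr ⟨c, hac, hcb⟩) hne
    · exact ⟨c, hac, hcb⟩

theorem exists_sto_cf_of_cycle (hacyclic : ∀ t, ¬ TransGen (τ.hbStep τ.vis0) t t) {s : T}
    (hs : TransGen (τ.hbStep τ.arb0) s s) :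
    ∃ t a b, ReflTransGen (τ.hbStep τ.arb0) t a ∧ τ.stoR a b ∧ τ.cf b t := by
  obtain ⟨a, t, hsa, hat, hne, hts⟩ := (transGen_or_exists_not_step hs).resolve_left (hacyclic s)
  obtain ⟨b, hab, hbt⟩ := exists_sto_cf_of_hbStep_arb0 hat hne
  exact ⟨t, a, b, hts.trans hsa, hab, hbt⟩

@[simp]
theorem wrPart_fst (t : T) : (τ.wrPart t).1 = t := by
  unfold wrPart
  split_ifs <;> rfl

theorem wrPart_injective : Function.Injective τ.wrPart :=
  Function.LeftInverse.injective wrPart_fst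

theorem wrPart_t0 : τ.wrPart τ.t0 = rdPart τ.t0 := if_pos rfl

theorem rdPart_ne_wrPart {t : T} (ht : t ≠ τ.t0) : rdPart t ≠ τ.wrPart t := by
  simp [rdPart, wrPart, ht]

theorem mem_split_RS {p : T × Bool} {x : X} :
    x ∈ τ.split.RS p ↔ ∃ t, p = rdPart t ∧ x ∈ τ.RS t := by
  simp only [split]
  split_ifs with hp
  · exact ⟨fun hx ↦ ⟨p.1, hp, hx⟩, by rintro ⟨t, rfl, hx⟩; exact hx⟩
  · exact ⟨False.elim, by rintro ⟨t, rfl, -⟩; exact hp rfl⟩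

theorem mem_split_WS {p : T × Bool} {x : X} :
    x ∈ τ.split.WS p ↔ ∃ t, p = τ.wrPart t ∧ x ∈ τ.WS t := by
  simp only [split]
  split_ifs with hp
  · exact ⟨fun hx ↦ ⟨p.1, hp, hx⟩, by rintro ⟨t, rfl, hx⟩; rwa [wrPart_fst]⟩
  · exact ⟨False.elim, by rintro ⟨t, rfl, -⟩; exact hp (by rw [wrPart_fst])⟩

theorem coArb_split_iff {ord : T × Bool → T × Bool → Prop} (hord : StrictPartialRel ord) :
    τ.split.CoArb ord ↔
      (∀ t, t ≠ τ.t0 → ord (rdPart t) (τ.wrPart t)) ∧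
      (∀ u v, τ.vis0 u v → ord (τ.wrPart u) (rdPart v)) ∧
      ∀ u v, τ.stoR u v → ord (τ.wrPart u) (τ.wrPart v) := by
  refine hord.transGen_le_iff.trans ⟨fun h ↦ ⟨fun t ht ↦ ?_, ?_, ?_⟩, ?_⟩
  · exact h _ _ (.inl (.single (.inl ⟨t, ht, rfl, rfl⟩)))
  · rintro u v (huv | ⟨x, huv⟩)
    · exact h _ _ (.inl (.single (.inr ⟨u, v, huv, rfl, rfl⟩)))
    · exact h _ _ (.inr (.inl ⟨x, u, v, huv, rfl, rfl⟩))
  · rintro u v ⟨x, huv⟩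
    exact h _ _ (.inr (.inr ⟨x, u, v, huv, rfl, rfl⟩))
  · rintro ⟨hrw, hvis, hsto⟩ p q (hpq | ⟨x, u, v, huv, rfl, rfl⟩ | ⟨x, u, v, huv, rfl, rfl⟩)
    · refine hord.transGen_le_iff.2 ?_ p q hpq
      rintro _ _ (⟨t, ht, rfl, rfl⟩ | ⟨u, v, huv, rfl, rfl⟩)
      · exact hrw t ht
      · exact hvis u v (.inl huv)
    · exact hvis u v (.inr ⟨x, huv⟩)
    · exact hsto u v ⟨x, huv⟩

theorem retVal_split_iff {ord : T × Bool → T × Bool → Prop} :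
    τ.split.RetVal ord ord ↔
      τ.RetVal (fun u v ↦ ord (τ.wrPart u) (rdPart v))
        (fun u v ↦ ord (τ.wrPart u) (τ.wrPart v)) := by
  constructor
  · intro h t x hx
    obtain ⟨p, ⟨hpt, hxp⟩, hmax, w, v, hwv, rfl, hv⟩ := h (rdPart t) x (mem_split_RS.2 ⟨t, rfl, hx⟩)
    obtain rfl : t = v := congrArg Prod.fst hv
    obtain ⟨w', hw', hxw⟩ := mem_split_WS.1 hxp
    obtain rfl : w = w' := wrPart_injective hw'
    refine ⟨w, ⟨hpt, hxw⟩, fun u hut hxu hne ↦ ?_, hwv⟩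
    exact hmax _ hut (mem_split_WS.2 ⟨u, rfl, hxu⟩)
      (wrPart_injective.ne hne)
  · rintro h p x hx
    obtain ⟨t, rfl, hxt⟩ := mem_split_RS.1 hx
    obtain ⟨w, ⟨hwt, hxw⟩, hmax, hrf⟩ := h t x hxt
    refine ⟨τ.wrPart w, ⟨hwt, mem_split_WS.2 ⟨w, rfl, hxw⟩⟩, fun q hqt hxq hne ↦ ?_,
      w, t, hrf, rfl, rfl⟩
    obtain ⟨u, rfl, hxu⟩ := mem_split_WS.1 hxq
    exact hmax u hqt hxu fun heq ↦ hne (heq ▸ rfl)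

theorem isPC_of_isSER_split (h : τ.split.IsSER) : τ.IsPC := by
  obtain ⟨ord, hord, hCoArb, hret⟩ := h
  obtain ⟨hrw, hvis0, hsto⟩ := (coArb_split_iff hord.1).1 hCoArb
  obtain ⟨⟨hirrefl, htrans⟩, htotal⟩ := hord
  let vis u v := ord (τ.wrPart u) (rdPart v)
  let arb u v := ord (τ.wrPart u) (τ.wrPart v)
  have hle : vis ≤ arb := by
    intro u v huv
    by_cases hv : v = τ.t0
    · subst hv
      simpa only [arb, wrPart_t0] using huv
    · exact htrans _ _ _ huv (hrw v hv)
  have hvis : StrictPartialRel vis :=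
    ⟨fun u huu ↦ hirrefl _ (hle u u huu), fun u v _ huv hvw ↦ htrans _ _ _ (hle u v huv) hvw⟩
  have harb : StrictTotalRel arb :=
    ⟨⟨fun _ ↦ hirrefl _, fun _ _ _ ↦ htrans _ _ _⟩,
      fun _ _ hne ↦ htotal _ _ (wrPart_injective.ne hne)⟩
  have harb0 : τ.arb0 ≤ arb := fun u v huv ↦
    (or_assoc.2 huv).elim (fun h ↦ hle u v (hvis0 u v h)) (hsto u v)
  exact ⟨vis, arb, ⟨hvis, harb, hle⟩, hvis.transGen_le_iff.2 hvis0,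
    harb.1.transGen_le_iff.2 harb0, retVal_split_iff.1 hret, fun _ _ _ ↦ htrans _ _ _⟩

/-- The position of a part of a transaction in the serial order of the split trace induced by an
execution: a write part sits at the `arb`-initial segment ending in its transaction, a read part
right after (`true`) the snapshot of its transaction. -/
noncomputable def splitPos (τ : TxnTrace T X V) (vis arb : T → T → Prop) (p : T × Bool) :
    Set T ×ₗ Bool :=
  if p = τ.wrPart p.1 then toLex ({s | ReflGen arb s p.1}, false) else toLex ({s | vis s p.1}, true)

theorem splitPos_wrPart (t : T) :
    τ.splitPos vis arb (τ.wrPart t) = toLex ({s | ReflGen arb s t}, false) := by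
  simp [splitPos]

theorem splitPos_rdPart {t : T} (ht : t ≠ τ.t0) :
    τ.splitPos vis arb (rdPart t) = toLex ({s | vis s t}, true) :=
  if_neg (rdPart_ne_wrPart ht)

theorem splitPos_wrPart_lt_wrPart (harb : StrictPartialRel arb) {u v : T} (h : arb u v) :
    τ.splitPos vis arb (τ.wrPart u) < τ.splitPos vis arb (τ.wrPart v) := by
  have hsub : {s | ReflGen arb s u} ⊆ {s | ReflGen arb s v} := by
    rintro s (_ | hsu)
    · exact .single h
    · exact .single (harb.2 s u v hsu h)
  have hvu : ¬ ReflGen arb v u := by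
    rintro (_ | hvu)
    · exact harb.1 u h
    · exact harb.1 u (harb.2 u v u h hvu)
  rw [splitPos_wrPart, splitPos_wrPart, Prod.Lex.toLex_lt_toLex]
  exact .inl (hsub.ssubset_of_mem_notMem .refl hvu)

theorem splitPos_wrPart_lt_rdPart (hprefix : PrefixAx vis arb) {u v : T} (hv : v ≠ τ.t0)
    (h : vis u v) : τ.splitPos vis arb (τ.wrPart u) < τ.splitPos vis arb (rdPart v) := by
  have hsub : {s | ReflGen arb s u} ⊆ {s | vis s v} := by
    rintro s (_ | hsu)
    · exact h
    · exact hprefix s u v hsu h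
  rw [splitPos_wrPart, splitPos_rdPart hv, Prod.Lex.toLex_lt_toLex']
  exact ⟨hsub, fun _ ↦ Bool.false_lt_true⟩

theorem splitPos_rdPart_lt_wrPart (harb : StrictTotalRel arb) (hprefix : PrefixAx vis arb)
    {u v : T} (hv : v ≠ τ.t0) (h : ¬ vis u v) :
    τ.splitPos vis arb (rdPart v) < τ.splitPos vis arb (τ.wrPart u) := by
  have hsub : {s | vis s v} ⊆ {s | ReflGen arb s u} := by
    intro s hsv
    have hne : s ≠ u := by
      rintro rfl
      exact h hsv
    exact .single ((harb.2 s u hne).resolve_right fun hus ↦ h (hprefix u s v hus hsv))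
  rw [splitPos_wrPart, splitPos_rdPart hv, Prod.Lex.toLex_lt_toLex]
  exact .inl (hsub.ssubset_of_mem_notMem .refl h)

theorem exists_split_order (hgood : GoodPair vis arb) (hprefix : PrefixAx vis arb)
    (hinit : ∀ t, ¬ arb t τ.t0) :
    ∃ ord, StrictTotalRel ord ∧ (∀ u v, ord (τ.wrPart u) (τ.wrPart v) ↔ arb u v) ∧
      (∀ u v, ord (τ.wrPart u) (rdPart v) ↔ vis u v) ∧
      ∀ t, t ≠ τ.t0 → ord (rdPart t) (τ.wrPart t) := by
  obtain ⟨hvis, harb, hle⟩ := hgood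
  have hpos : StrictPartialRel fun p q ↦ τ.splitPos vis arb p < τ.splitPos vis arb q :=
    ⟨fun _ ↦ lt_irrefl _, fun _ _ _ ↦ lt_trans⟩
  obtain ⟨ord, hord, hext⟩ := hpos.exists_strictTotalRel_ge
  have hasymm {p q} (hpq : ord p q) (hqp : ord q p) : False :=
    hord.1.1 p (hord.1.2 p q p hpq hqp)
  have hww (u v : T) : ord (τ.wrPart u) (τ.wrPart v) ↔ arb u v := by
    refine ⟨fun huv ↦ ?_, fun huv ↦ hext _ _ (splitPos_wrPart_lt_wrPart harb.1 huv)⟩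
    have hne : u ≠ v := by
      rintro rfl
      exact hord.1.1 _ huv
    exact (harb.2 u v hne).resolve_right fun hvu ↦
      hasymm huv (hext _ _ (splitPos_wrPart_lt_wrPart harb.1 hvu))
  have hrw {u v : T} (hv : v ≠ τ.t0) (h : ¬ vis u v) : ord (rdPart v) (τ.wrPart u) :=
    hext _ _ (splitPos_rdPart_lt_wrPart harb hprefix hv h)
  refine ⟨ord, hord, hww, fun u v ↦ ?_, fun t ht ↦ hrw ht (hvis.1 t)⟩
  by_cases hv : v = τ.t0
  · subst hv
    rw [← wrPart_t0, hww]
    exact iff_of_false (hinit u) fun hu ↦ hinit u (hle _ _ hu)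
  · exact ⟨fun huv ↦ by_contra fun h ↦ hasymm huv (hrw hv h),
      fun huv ↦ hext _ _ (splitPos_wrPart_lt_rdPart hprefix hv huv)⟩

theorem WellFormed.not_rel_t0 (hwf : τ.WellFormed) (harb : StrictPartialRel arb)
    (hpo : τ.po ≤ arb) (t : T) : ¬ arb t τ.t0 := by
  intro ht
  by_cases h : t = τ.t0
  · exact harb.1 τ.t0 (h ▸ ht)
  · exact harb.1 t (harb.2 t τ.t0 t ht (hpo _ _ (hwf.po_init t h)))

theorem WellFormed.isSER_split_of_isPC (hwf : τ.WellFormed) (h : τ.IsPC) : τ.split.IsSER := by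
  obtain ⟨vis, arb, hgood, hvis0, harb0, hret, hprefix⟩ := isPC_iff_hasPrefixExecution.1 h
  have hinit := hwf.not_rel_t0 hgood.2.1.1 fun u v huv ↦ harb0 u v (.inl huv)
  obtain ⟨ord, hord, hww, hwr, hrw⟩ := exists_split_order hgood hprefix hinit
  refine ⟨ord, hord, (coArb_split_iff hord.1).2 ⟨hrw, fun u v huv ↦ ?_, fun u v huv ↦ ?_⟩,
    retVal_split_iff.2 ?_⟩
  · exact (hwr u v).2 (hvis0 u v huv)
  · exact (hww u v).2 (harb0 u v (.inr (.inr huv)))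
  · simpa only [hwr, hww] using hret

theorem WellFormed.isPC_iff_isSER_split (hwf : τ.WellFormed) : τ.IsPC ↔ τ.split.IsSER :=
  ⟨hwf.isSER_split_of_isPC, isPC_of_isSER_split⟩

end TxnTrace

theorem pc_not_si_iff_general {T X V : Type*} (τ : TxnTrace T X V)
    (hwf : τ.WellFormed) :
    (τ.IsPC ∧ ¬ τ.IsSI) ↔
      (τ.split.IsSER ∧ ∃ t a b,
        Relation.ReflTransGen
          (fun p q => τ.arb0 p q ∨ ∃ c, τ.arb0 p c ∧ τ.cf c q) t a ∧
        τ.stoR a b ∧ τ.cf b t) := by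
  rw [← hwf.isPC_iff_isSER_split]
  refine and_congr_right fun hPC ↦ ?_
  rw [hwf.isSI_iff_acyclic]
  constructor
  · intro hSI
    obtain ⟨s, hs⟩ := not_forall_not.1 hSI
    exact TxnTrace.exists_sto_cf_of_cycle (hwf.isPC_iff_acyclic.1 hPC) hs
  · rintro ⟨t, a, b, hta, hab, hbt⟩ hacyclic
    exact hacyclic t (.tail' hta (.inr ⟨b, .inr (.inr hab), hbt⟩))

/-- trace-level content of Theorem 4: a trace is PC but not SI
iff its split trace is SER and there is a transaction `t` with
`(t,t) ∈ R* ; sto ; cf`, where `R = (po ∪ rf ∪ sto) ∪ ((po ∪ rf ∪ sto) ; cf)`. -/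
theorem pc_not_si_iff {T X V : Type*} [Fintype T] (τ : TxnTrace T X V)
    (hwf : τ.WellFormed) :
    (τ.IsPC ∧ ¬ τ.IsSI) ↔
      (τ.split.IsSER ∧ ∃ t a b,
        Relation.ReflTransGen
          (fun p q => τ.arb0 p q ∨ ∃ c, τ.arb0 p c ∧ τ.cf c q) t a ∧
        τ.stoR a b ∧ τ.cf b t) :=
  pc_not_si_iff_general τ hwf
end

section
/- Let τ be a trace over (T,X,V), and let vis (a strict partial order on T) and arb (a strict total order on T with vis ⊆ arb) satisfy PoCo, CoArb, RetVal and Prefix. Then (po ∪ rf) ; cf ⊆ arb: whenever (t1,t2) ∈ po ∪ rf and (t2,t3) ∈ cf, one has (t1,t3) ∈ arb. (Claim 'vis0;cf ⊆ arb is a consequence of the PC axioms' used in the proof of Lemma 7.) -/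
open scoped Classical

/-!
If `(t₂, t₃) ∈ cf`, then `t₃` is not visible to `t₂`: otherwise `RetVal` would put `t₃` `arb`-before
the transaction that `t₂` reads from, against the store order. By `Prefix`, whatever is
`arb`-before a `vis`-predecessor of `t₂` is visible to `t₂`; so `t₃` can only come `arb`-after every
`vis`-predecessor of `t₂`.
-/

theorem StrictPartialRel.asymm {α : Type*} {r : α → α → Prop} (hr : StrictPartialRel r) {a b : α}
    (hab : r a b) : ¬ r b a :=
  fun hba => hr.1 a (hr.2 a b a hab hba)

theorem PrefixAx.vis_of_not_arb {α : Type*} {vis arb : α → α → Prop} (hpre : PrefixAx vis arb)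
    (harb : StrictTotalRel arb) {a b c : α} (hac : vis a c) (hab : ¬ arb a b) : vis b c := by
  rcases eq_or_ne a b with rfl | hne
  · exact hac
  · exact hpre b a c ((harb.2 a b hne).resolve_left hab) hac

namespace TxnTrace

variable {T X V : Type*} {τ : TxnTrace T X V} {vis arb : T → T → Prop} {x : X} {w t t' : T}

theorem PoCo.vis_of_vis0 (hpoco : τ.PoCo vis) (h : τ.vis0 t' t) : vis t' t :=
  hpoco t' t (.single h)

theorem CoArb.arb_of_sto (hcoarb : τ.CoArb arb) (h : τ.sto x t' t) : arb t' t :=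
  hcoarb t' t (.single (.inr (.inr ⟨x, h⟩)))

theorem WellFormed.ne_of_sto (hwf : τ.WellFormed) (h : τ.sto x t' t) : t' ≠ t := by
  rintro rfl
  exact hwf.sto_irrefl x t' h

theorem WellFormed.rf_unique (hwf : τ.WellFormed) (h : τ.rf x w t) (h' : τ.rf x t' t) : w = t' :=
  (hwf.rf_total t x (hwf.rf_wf x w t h).2.1).unique h h'

theorem RetVal.arb_of_rf (hret : τ.RetVal vis arb) (hwf : τ.WellFormed) (hrf : τ.rf x w t)
    (hvis : vis t' t) (hwrite : x ∈ τ.WS t') (hne : t' ≠ w) : arb t' w := by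
  obtain ⟨w', -, hmax, hrf'⟩ := hret t x (hwf.rf_wf x w t hrf).2.1
  obtain rfl : w = w' := hwf.rf_unique hrf hrf'
  exact hmax t' hvis hwrite hne

theorem RetVal.not_vis_of_cf (hret : τ.RetVal vis arb) (hwf : τ.WellFormed)
    (harb : StrictPartialRel arb) (hcoarb : τ.CoArb arb) (hcf : τ.cf t t') : ¬ vis t' t := by
  intro hvis
  obtain ⟨-, x, w, hrf, hsto⟩ := hcf
  have hwrite : x ∈ τ.WS t' := (hwf.sto_dom x w t' hsto).2
  have hbefore : arb t' w := hret.arb_of_rf hwf hrf hvis hwrite (hwf.ne_of_sto hsto).symm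
  exact harb.asymm hbefore (hcoarb.arb_of_sto hsto)

end TxnTrace

theorem vis0_cf_subset_arb_general {T X V : Type*} {τ : TxnTrace T X V} {vis arb : T → T → Prop}
    (hwf : τ.WellFormed) (harb : StrictTotalRel arb) (hcoarb : τ.CoArb arb)
    (hret : τ.RetVal vis arb) (hpre : PrefixAx vis arb) {t1 t2 t3 : T}
    (hvis : vis t1 t2) (hcf : τ.cf t2 t3) : arb t1 t3 := by
  by_contra hnot
  exact hret.not_vis_of_cf hwf harb.1 hcoarb hcf (hpre.vis_of_not_arb harb hvis hnot)

/-- under the PC axioms, `(po ∪ rf) ; cf ⊆ arb`. -/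
theorem vis0_cf_subset_arb {T X V : Type*} [Fintype T] (τ : TxnTrace T X V)
    (hwf : τ.WellFormed) (vis arb : T → T → Prop)
    (hvis : StrictPartialRel vis) (harb : StrictTotalRel arb)
    (hsub : ∀ a b, vis a b → arb a b)
    (hpoco : τ.PoCo vis) (hcoarb : τ.CoArb arb)
    (hret : τ.RetVal vis arb) (hpre : PrefixAx vis arb) :
    ∀ t1 t2 t3, τ.vis0 t1 t2 → τ.cf t2 t3 → arb t1 t3 := by
  intro t1 t2 t3 hvis0 hcf
  exact vis0_cf_subset_arb_general hwf harb hcoarb hret hpre (hpoco.vis_of_vis0 hvis0) hcf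
end
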